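/- arXiv:1605.05190 — 3 statements merged into one kernel-verified Lean document; each statement's English description precedes it below -/
import Mathlib

section
/- Let 𝒜 be a C*-algebra. The partially ordered real Banach space 𝒜_sa of self-adjoint elements of 𝒜, endowed with its canonical order, is a lattice (i.e. every pair of elements of 𝒜_sa has a greatest lower bound in 𝒜_sa) if and only if the multiplication of 𝒜 is commutative. -/
section

variable {A : Type*} [NonUnitalCStarAlgebra A]

lemma IsSelfAdjoint.eq_zero_of_mul_self {a : A} (ha : IsSelfAdjoint a) (h : a * a = 0) : a = 0 :=
  CStarRing.star_mul_self_eq_zero_iff a |>.mp <| by rwa [ha.star_eq]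

/-- In a reduced algebra, the square of an inner derivation is additive along a cut. -/
lemma lie_lie_add_of_cut (hred : ∀ y : A, y * y = 0 → y = 0) {a b : A} {t : ℝ}
    (hab : a * b = t • b) (hba : b * a = t • b) (x : A) :
    ⁅a + b, ⁅a + b, x⁆⁆ = ⁅a, ⁅a, x⁆⁆ + ⁅b, ⁅b, x⁆⁆ := by
  have h1 : b * x * a = t • (b * x) := by
    rw [← sub_eq_zero]
    refine hred _ ?_
    have : (b * x * a - t • (b * x)) * b = 0 := by
      rw [sub_mul, mul_assoc, hab, mul_smul_comm, smul_mul_assoc, sub_self]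
    rw [mul_sub, mul_smul_comm, ← mul_assoc, ← mul_assoc, this, zero_mul, zero_mul, smul_zero,
      sub_self]
  have h2 : a * (x * b) = t • (x * b) := by
    rw [← sub_eq_zero]
    refine hred _ ?_
    have : b * (a * (x * b) - t • (x * b)) = 0 := by
      rw [mul_sub, ← mul_assoc, hba, mul_smul_comm, smul_mul_assoc, sub_self]
    rw [sub_mul, smul_mul_assoc, mul_assoc a, mul_assoc x, this, mul_zero, mul_zero, smul_zero,
      sub_self]
  simp only [Ring.lie_def, add_mul, mul_add, mul_sub, sub_mul]
  simp only [← mul_assoc] at h2 ⊢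
  simp only [h1, h2, hab, hba, mul_assoc x, smul_mul_assoc, mul_smul_comm]
  abel

lemma norm_lie_lie_le (h x : A) : ‖⁅h, ⁅h, x⁆⁆‖ ≤ 4 * ‖h‖ ^ 2 * ‖x‖ := by
  have key : ∀ z : A, ‖⁅h, z⁆‖ ≤ 2 * ‖h‖ * ‖z‖ := fun z => by
    rw [Ring.lie_def]
    linarith [norm_sub_le (h * z) (z * h), norm_mul_le h z, norm_mul_le z h, mul_comm ‖z‖ ‖h‖]
  calc ‖⁅h, ⁅h, x⁆⁆‖ ≤ 2 * ‖h‖ * ‖⁅h, x⁆‖ := key _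
    _ ≤ 2 * ‖h‖ * (2 * ‖h‖ * ‖x‖) := by gcongr; exact key x
    _ = 4 * ‖h‖ ^ 2 * ‖x‖ := by ring

variable [PartialOrder A] [StarOrderedRing A]

lemma mul_eq_zero_of_conjugate_eq_zero {a c : A} (hc : 0 ≤ c) (ha : IsSelfAdjoint a)
    (h : a * c * a = 0) : c * a = 0 := by
  obtain ⟨s, rfl⟩ := CStarAlgebra.nonneg_iff_eq_star_mul_self.mp hc
  have : s * a = 0 := by
    rw [← CStarRing.star_mul_self_eq_zero_iff, star_mul, ha.star_eq, ← h]
    simp only [mul_assoc]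
  rw [mul_assoc, this, mul_zero]

lemma eq_zero_of_cube_nonpos {c : A} (hc : 0 ≤ c) (h : c * c * c ≤ 0) : c = 0 :=
  (IsSelfAdjoint.of_nonneg hc).eq_zero_of_mul_self <|
    mul_eq_zero_of_conjugate_eq_zero hc (.of_nonneg hc) <|
      le_antisymm h (conjugate_nonneg_of_nonneg hc hc)

/-- In a C*-algebra, orthogonal positive elements have infimum zero among positive elements. -/
lemma eq_zero_of_le_of_le_of_mul_eq_zero {d p q : A} (hd : 0 ≤ d) (hp : d ≤ p) (hq : d ≤ q)
    (hpq : p * q = 0) : d = 0 := by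
  have hq0 := hd.trans hq
  have h1 : d * q = 0 := by
    refine mul_eq_zero_of_conjugate_eq_zero hd (.of_nonneg hq0) (le_antisymm ?_ ?_)
    · refine (conjugate_le_conjugate_of_nonneg hp hq0).trans_eq ?_
      rw [mul_assoc, hpq, mul_zero]
    · exact conjugate_nonneg_of_nonneg hd hq0
  refine eq_zero_of_cube_nonpos hd ((conjugate_le_conjugate_of_nonneg hq hd).trans_eq ?_)
  rw [h1, zero_mul]

lemma conjugate_eq_zero_of_forall_le {c P Q : A} (hc : 0 ≤ c) (hP : IsSelfAdjoint P)
    (hPQ : P * Q = 0) (h : ∀ ε : ℝ, 0 < ε → c ≤ ε • P + ε⁻¹ • Q) : P * c * P = 0 := by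
  have key : ∀ ε : ℝ, 0 < ε → ‖P * c * P‖ ≤ ε * ‖P * P * P‖ := by
    intro ε hε
    have h1 := hP.conjugate_le_conjugate (h ε hε)
    rw [mul_add, mul_smul_comm, mul_smul_comm, hPQ, smul_zero, add_zero, smul_mul_assoc] at h1
    refine (CStarAlgebra.norm_le_norm_of_nonneg_of_le (hP.conjugate_nonneg hc) h1).trans ?_
    rw [norm_smul, Real.norm_of_nonneg hε.le]
  rw [← norm_le_zero_iff]
  refine le_of_forall_pos_le_add fun δ hδ => ?_
  have hK : 0 < ‖P * P * P‖ + 1 := by positivity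
  refine (key (δ / (‖P * P * P‖ + 1)) (by positivity)).trans ?_
  rw [zero_add, div_mul_eq_mul_div, div_le_iff₀ hK]
  nlinarith

lemma eq_zero_of_forall_le_smul_add_inv_smul {c P Q : A} (hc : 0 ≤ c) (hP : IsSelfAdjoint P)
    (hQ : IsSelfAdjoint Q) (hPQ : P * Q = 0)
    (h : ∀ ε : ℝ, 0 < ε → c ≤ ε • P + ε⁻¹ • Q) : c = 0 := by
  have hQP : Q * P = 0 := by simpa [hP.star_eq, hQ.star_eq] using congr(star $hPQ)
  have h1 := mul_eq_zero_of_conjugate_eq_zero hc hP (conjugate_eq_zero_of_forall_le hc hP hPQ h)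
  have h2 := mul_eq_zero_of_conjugate_eq_zero hc hQ <|
    conjugate_eq_zero_of_forall_le hc hQ hQP fun ε hε => by
      simpa [add_comm] using h ε⁻¹ (inv_pos.mpr hε)
  refine eq_zero_of_cube_nonpos hc
    ((conjugate_le_conjugate_of_nonneg (h 1 one_pos) hc).trans_eq ?_)
  simp [mul_add, h1, h2]

/-- If the self-adjoint part is a lattice, the positive part of the functional calculus is the
lattice supremum with zero. -/
lemma posPart_le_of_lattice
    (hlat : ∀ a b : selfAdjoint A, ∃ c : selfAdjoint A, IsGLB ({a, b} : Set (selfAdjoint A)) c)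
    {x y : A} (hx : IsSelfAdjoint x) (hy : 0 ≤ y) (hxy : x ≤ y) : x⁺ ≤ y := by
  obtain ⟨⟨u, hu⟩, hl, hg⟩ := hlat ⟨-x, hx.neg⟩ 0
  have glb : ∀ w : A, 0 ≤ w → x ≤ w → -w ≤ u := fun w hw hxw =>
    hg (a := (⟨-w, (IsSelfAdjoint.of_nonneg hw).neg⟩ : selfAdjoint A)) <| by
      rintro z (rfl | rfl)
      · exact neg_le_neg hxw
      · exact neg_nonpos.mpr hw
  have hu1 : u ≤ -x := hl (Set.mem_insert _ _)
  have hu0 : u ≤ 0 := hl (Set.mem_insert_of_mem _ rfl)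
  have hdecomp := CFC.posPart_sub_negPart x hx
  have hxp : x ≤ x⁺ := by
    nth_rw 1 [← hdecomp]
    exact sub_le_self _ (CFC.negPart_nonneg x)
  have hd : x⁺ + u = 0 := by
    refine eq_zero_of_le_of_le_of_mul_eq_zero ?_ ?_ ?_ (CFC.posPart_mul_negPart x)
    · exact neg_le_iff_add_nonneg'.mp (glb _ (CFC.posPart_nonneg x) hxp)
    · exact add_le_of_nonpos_right hu0
    · rw [show x⁻ = x⁺ + -x by nth_rw 3 [← hdecomp]; abel]
      gcongr
  rw [eq_neg_of_add_eq_zero_left hd]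
  exact neg_le.mp (glb y hy hxy)

lemma posPart_add_negPart_le_of_lattice
    (hlat : ∀ a b : selfAdjoint A, ∃ c : selfAdjoint A, IsGLB ({a, b} : Set (selfAdjoint A)) c)
    {x y : A} (hx : IsSelfAdjoint x) (hxy : x ≤ y) (hxy' : -x ≤ y) : x⁺ + x⁻ ≤ y := by
  have h0 : 0 ≤ y + x := neg_le_iff_add_nonneg.mp hxy'
  have h1 : 0 ≤ y - x := sub_nonneg.mpr hxy
  have hy : (2⁻¹ : ℝ) • (y + x) - x = (2⁻¹ : ℝ) • (y - x) := by module
  have hle : x⁺ ≤ (2⁻¹ : ℝ) • (y + x) := by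
    refine posPart_le_of_lattice hlat hx (smul_nonneg (by norm_num) h0) ?_
    rw [← sub_nonneg, hy]
    exact smul_nonneg (by norm_num) h1
  have hle' : x⁻ ≤ (2⁻¹ : ℝ) • (y - x) := by
    rw [← hy, ← sub_eq_iff_eq_add.mpr (sub_eq_iff_eq_add'.mp (CFC.posPart_sub_negPart x hx))]
    exact sub_le_sub_right hle x
  refine (add_le_add hle hle').trans_eq ?_
  module

/-- A C*-algebra whose self-adjoint part is a lattice is reduced. -/
lemma eq_zero_of_mul_self_of_lattice
    (hlat : ∀ a b : selfAdjoint A, ∃ c : selfAdjoint A, IsGLB ({a, b} : Set (selfAdjoint A)) c)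
    {y : A} (hy : y * y = 0) : y = 0 := by
  set b := y * star y with hb
  have hbs : star b = b := by simp [hb]
  set z := star y * b with hz
  have hzs : star z = b * y := by simp [hz, hbs]
  have hx : IsSelfAdjoint (z + star z) := IsSelfAdjoint.add_star_self z
  have hyb : y * b = 0 := by rw [hb, ← mul_assoc, hy, zero_mul]
  have expand : ∀ ε : ℝ, 0 < ε → ∀ σ : ℝ, σ * σ = 1 →
      0 ≤ ε • (star y * y) + ε⁻¹ • (b * b) + σ • (z + star z) := by
    intro ε hε σ hσ
    have h := smul_nonneg (inv_nonneg.mpr hε.le) (star_mul_self_nonneg ((ε * σ) • y + b))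
    refine h.trans_eq ?_
    have e : star ((ε * σ) • y + b) * ((ε * σ) • y + b)
        = (ε * ε) • (star y * y) + b * b + (ε * σ) • (z + star z) := by
      rw [star_add, star_smul, hbs, star_trivial, hzs, hz]
      simp only [add_mul, mul_add, smul_mul_assoc, mul_smul_comm, smul_smul, smul_add]
      rw [show ε * σ * (ε * σ) = ε * ε by linear_combination ε * ε * hσ]
      abel
    rw [e]
    simp only [smul_add, smul_smul]
    rw [show ε⁻¹ * (ε * ε) = ε by field_simp, show ε⁻¹ * (ε * σ) = σ by field_simp]
  have habs : (z + star z)⁺ + (z + star z)⁻ = 0 := by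
    refine eq_zero_of_forall_le_smul_add_inv_smul (P := star y * y) (Q := b * b)
      (add_nonneg (CFC.posPart_nonneg _) (CFC.negPart_nonneg _)) (.star_mul_self y) ?_ ?_ ?_
    · simp [IsSelfAdjoint, hbs]
    · rw [mul_assoc, ← mul_assoc y, hyb, zero_mul, mul_zero]
    · intro ε hε
      refine posPart_add_negPart_le_of_lattice hlat hx ?_ ?_
      · have := expand ε hε (-1) (by norm_num)
        rwa [neg_one_smul, ← sub_eq_add_neg, sub_nonneg] at this
      · have := expand ε hε 1 (by norm_num)
        rwa [one_smul, ← neg_le_iff_add_nonneg] at this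
  have hsum : z + star z = 0 := by
    obtain ⟨h1, h2⟩ := (add_eq_zero_iff_of_nonneg (CFC.posPart_nonneg _)
      (CFC.negPart_nonneg _)).mp habs
    rw [← CFC.posPart_sub_negPart _ hx, h1, h2, sub_zero]
  have hbb : b * b = 0 := by
    have h := congr(y * $hsum)
    rwa [mul_add, hzs, hz, ← mul_assoc y b, hyb, zero_mul, add_zero, ← mul_assoc, ← hb,
      mul_zero] at h
  exact (CStarRing.mul_star_self_eq_zero_iff y).mp (IsSelfAdjoint.eq_zero_of_mul_self hbs hbb)

/-- Cutting a positive element in two pieces at height `t`. -/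
lemma exists_cut {h : A} (hh : 0 ≤ h) {t : ℝ} (ht : 0 ≤ t) (hnorm : ‖h‖ ≤ 2 * t) :
    ∃ a b : A, 0 ≤ a ∧ 0 ≤ b ∧ ‖a‖ ≤ t ∧ ‖b‖ ≤ t ∧ h = a + b ∧ a * b = t • b ∧ b * a = t • b := by
  have hsa := IsSelfAdjoint.of_nonneg hh
  have hmem : ∀ s ∈ quasispectrum ℝ h, 0 ≤ s ∧ s ≤ 2 * t := fun s hs =>
    ⟨quasispectrum_nonneg_of_nonneg h hh s hs,
      (le_abs_self s).trans ((NonUnitalIsometricContinuousFunctionalCalculus.norm_quasispectrum_le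
        h hs hsa).trans hnorm)⟩
  set f : ℝ → ℝ := fun s => min s t with hf
  set g : ℝ → ℝ := fun s => max (s - t) 0 with hg
  have hfc : ContinuousOn f (quasispectrum ℝ h) := by fun_prop
  have hgc : ContinuousOn g (quasispectrum ℝ h) := by fun_prop
  have hf0 : f 0 = 0 := min_eq_left ht
  have hg0 : g 0 = 0 := max_eq_right (by linarith)
  have hcut : (fun s => f s * g s) = fun s => t • g s := by
    ext s
    rcases le_total s t with hst | hst
    · have : g s = 0 := max_eq_right (by linarith)
      rw [this, mul_zero, smul_zero]
    · have : f s = t := min_eq_right hst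
      rw [this, smul_eq_mul]
  have hadd : (fun s => f s + g s) = fun s => s := by
    ext s
    rcases le_total s t with hst | hst
    · simp only [hf, hg, min_eq_left hst, max_eq_right (sub_nonpos.mpr hst), add_zero]
    · simp only [hf, hg, min_eq_right hst, max_eq_left (sub_nonneg.mpr hst), add_sub_cancel]
  have hmul : cfcₙ f h * cfcₙ g h = t • cfcₙ g h := by
    rw [← cfcₙ_mul f g h hfc hf0 hgc hg0, ← cfcₙ_smul t g h hgc hg0, hcut]
  refine ⟨cfcₙ f h, cfcₙ g h, cfcₙ_nonneg fun s hs => le_min (hmem s hs).1 ht,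
    cfcₙ_nonneg fun s _ => le_max_right _ _, norm_cfcₙ_le fun s hs => ?_,
    norm_cfcₙ_le fun s hs => ?_, ?_, hmul, (cfcₙ_commute_cfcₙ g f h).eq.trans hmul⟩
  · rw [Real.norm_of_nonneg (le_min (hmem s hs).1 ht)]
    exact min_le_right _ _
  · rw [Real.norm_of_nonneg (le_max_right _ _)]
    exact max_le (by linarith [(hmem s hs).2]) ht
  · rw [← cfcₙ_add f g h hfc hf0 hgc hg0, hadd, cfcₙ_id' ℝ h]

/-- Repeated bisection shows that squares of inner derivations by positive elements vanish. -/
lemma lie_lie_eq_zero_of_reduced (hred : ∀ y : A, y * y = 0 → y = 0) {h : A} (hh : 0 ≤ h)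
    (x : A) : ⁅h, ⁅h, x⁆⁆ = 0 := by
  have bound : ∀ n : ℕ, ∀ t : ℝ, 0 ≤ t → ∀ h : A, 0 ≤ h → ‖h‖ ≤ t →
      ‖⁅h, ⁅h, x⁆⁆‖ ≤ (1 / 2) ^ n * (4 * t ^ 2 * ‖x‖) := by
    intro n
    induction n with
    | zero =>
      intro t _ h _ hnorm
      rw [pow_zero, one_mul]
      exact (norm_lie_lie_le h x).trans (by gcongr)
    | succ n ih =>
      intro t ht h hh hnorm
      obtain ⟨a, b, ha, hb, hat, hbt, rfl, hab, hba⟩ :=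
        exists_cut hh (t := t / 2) (by linarith) (by linarith : ‖h‖ ≤ 2 * (t / 2))
      rw [lie_lie_add_of_cut hred hab hba]
      refine (norm_add_le _ _).trans ((add_le_add (ih (t / 2) (by linarith) a ha hat)
        (ih (t / 2) (by linarith) b hb hbt)).trans_eq ?_)
      ring
  have hlim : Filter.Tendsto (fun n : ℕ => (1 / 2 : ℝ) ^ n * (4 * ‖h‖ ^ 2 * ‖x‖))
      Filter.atTop (nhds 0) := by
    simpa using (tendsto_pow_atTop_nhds_zero_of_lt_one (r := (1 / 2 : ℝ)) (by norm_num)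
      (by norm_num)).mul_const (4 * ‖h‖ ^ 2 * ‖x‖)
  exact norm_le_zero_iff.mp
    (ge_of_tendsto' hlim fun n => bound n ‖h‖ (norm_nonneg h) h hh le_rfl)

/-- A reduced C*-algebra is commutative. -/
lemma mul_comm_of_reduced (hred : ∀ y : A, y * y = 0 → y = 0) (a b : A) : a * b = b * a := by
  have hpos : ∀ h : A, 0 ≤ h → ∀ x : A, h * x = x * h := by
    intro h hh x
    have hD := lie_lie_eq_zero_of_reduced hred hh
    have hleib : ∀ y z : A, ⁅h, y * z⁆ = ⁅h, y⁆ * z + y * ⁅h, z⁆ := fun y z => by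
      simp only [Ring.lie_def, mul_sub, sub_mul, mul_assoc]
      abel
    have hsq : (2 : ℝ) • (⁅h, x⁆ * ⁅h, x⁆) = 0 := by
      have hadd : ∀ y z : A, ⁅h, y + z⁆ = ⁅h, y⁆ + ⁅h, z⁆ := fun y z => by
        simp only [Ring.lie_def, mul_add, add_mul]
        abel
      have := hD (x * x)
      rwa [hleib, hadd, hleib, hleib, hD, zero_mul, mul_zero, zero_add, add_zero,
        ← two_smul ℝ] at this
    have h0 := hred _ ((smul_eq_zero_iff_right two_ne_zero).mp hsq)
    rwa [Ring.lie_def, sub_eq_zero] at h0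
  have ha : a ∈ Submodule.span ℂ {a : A | 0 ≤ a} := by
    rw [CStarAlgebra.span_nonneg]
    trivial
  induction ha using Submodule.span_induction with
  | mem h hh => exact hpos h hh b
  | zero => rw [zero_mul, mul_zero]
  | add y z _ _ hy hz => rw [add_mul, mul_add, hy, hz]
  | smul c y _ hy => rw [smul_mul_assoc, mul_smul_comm, hy]

lemma posPart_le_of_mul_comm (hc : ∀ a b : A, a * b = b * a) {x y : A} (hx : IsSelfAdjoint x)
    (hy : 0 ≤ y) (hxy : x ≤ y) : x⁺ ≤ y := by
  have hlc : ∀ a b c : A, a * (b * c) = b * (a * c) := fun a b c => by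
    rw [← mul_assoc, hc a b, mul_assoc]
  set p := x⁺ with hp
  set q := x⁻ with hq
  have hp0 : 0 ≤ p := CFC.posPart_nonneg x
  have hpq : p * q = 0 := CFC.posPart_mul_negPart x
  have hx' : p - q = x := CFC.posPart_sub_negPart x hx
  have hz : IsSelfAdjoint (y - p) := (IsSelfAdjoint.of_nonneg hy).sub (.of_nonneg hp0)
  set n := (y - p)⁻ with hn
  have hn0 : 0 ≤ n := CFC.negPart_nonneg _
  have hzn : (y - p) * n = -(n * n) := by
    nth_rw 1 [← CFC.posPart_sub_negPart (y - p) hz]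
    rw [sub_mul, CFC.posPart_mul_negPart, zero_sub]
  have hpzp : 0 ≤ p * (y - p) * p := by
    have h := conjugate_le_conjugate_of_nonneg (show -q ≤ y - p by
      rw [neg_le_sub_iff_le_add, ← sub_le_iff_le_add, hx']; exact hxy) hp0
    rwa [mul_neg, hpq, neg_zero, zero_mul] at h
  have hnp : n * n * n * p = 0 := by
    refine mul_eq_zero_of_conjugate_eq_zero (conjugate_nonneg_of_nonneg hn0 hn0)
      (.of_nonneg hp0) (le_antisymm ?_
        (conjugate_nonneg_of_nonneg (conjugate_nonneg_of_nonneg hn0 hn0) hp0))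
    have h := conjugate_nonneg_of_nonneg hpzp hn0
    have e : n * (p * (y - p) * p) * n = -(p * (n * n * n) * p) := by
      calc n * (p * (y - p) * p) * n = p * n * ((y - p) * n) * p := by
            simp only [mul_assoc, hc, hlc]
        _ = -(p * (n * n * n) * p) := by rw [hzn]; simp only [mul_neg, neg_mul, mul_assoc]
    rwa [e, neg_nonneg] at h
  have hn3 : n * n * n * n = 0 := by
    have hnn : (n * n) * y * (n * n) = -(n * (n * n * n) * n) := by
      calc (n * n) * y * (n * n) = n * n * n * ((y - p) * n) + n * n * n * p * n := by
            rw [sub_mul, mul_sub, mul_assoc (n * n * n) p n, sub_add_cancel]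
            simp only [hc, hlc]
        _ = -(n * (n * n * n) * n) := by
            rw [hzn, hnp]; simp only [mul_neg, mul_assoc, zero_mul, add_zero]
    have h3 := conjugate_nonneg_of_nonneg hn0 hn0
    refine mul_eq_zero_of_conjugate_eq_zero h3 (.of_nonneg hn0)
      (le_antisymm ?_ (conjugate_nonneg_of_nonneg h3 hn0))
    rw [← neg_nonneg, ← hnn]
    have hs : IsSelfAdjoint (n * n) := by
      have := IsSelfAdjoint.of_nonneg hn0
      simp [IsSelfAdjoint, this.star_eq]
    exact hs.conjugate_nonneg hy
  have hnn : n = 0 := by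
    have hs := IsSelfAdjoint.of_nonneg hn0
    refine hs.eq_zero_of_mul_self (IsSelfAdjoint.eq_zero_of_mul_self ?_ ?_)
    · simp [IsSelfAdjoint, hs.star_eq]
    · rw [← hn3]; simp only [mul_assoc]
  rw [← sub_nonneg, ← CFC.posPart_sub_negPart (y - p) hz, ← hn, hnn, sub_zero]
  exact CFC.posPart_nonneg _

end

/-- **Sherman's theorem.** For a C*-algebra `A` (not necessarily unital), endowed with its
canonical order (`b - a` positive iff `a ≤ b`, encoded by the `StarOrderedRing` instance),
the self-adjoint part `selfAdjoint A` is a lattice (every pair of elements has a greatest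
lower bound) if and only if the multiplication of `A` is commutative. -/
theorem sherman_lattice_iff_commutative
    {A : Type*} [NonUnitalCStarAlgebra A] [PartialOrder A] [StarOrderedRing A] :
    (∀ a b : selfAdjoint A, ∃ c : selfAdjoint A, IsGLB ({a, b} : Set (selfAdjoint A)) c) ↔
      (∀ a b : A, a * b = b * a) := by
  constructor
  · intro hlat
    exact mul_comm_of_reduced fun y hy => eq_zero_of_mul_self_of_lattice hlat hy
  · rintro hc ⟨a, ha⟩ ⟨b, hb⟩
    have hab : IsSelfAdjoint (a - b) := ha.sub hb
    have hp : IsSelfAdjoint (a - b)⁺ := .of_nonneg (CFC.posPart_nonneg _)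
    refine ⟨⟨a - (a - b)⁺, ha.sub hp⟩, ?_, ?_⟩
    · rintro _ (rfl | rfl)
      · exact sub_le_self a (CFC.posPart_nonneg (a - b))
      · have h : a - b ≤ (a - b)⁺ := by
          nth_rw 1 [← CFC.posPart_sub_negPart (a - b) hab]
          exact sub_le_self _ (CFC.negPart_nonneg _)
        exact sub_le_comm.mp h
    · rintro ⟨d, hd⟩ hlb
      have hda : d ≤ a := hlb (Set.mem_insert _ _)
      have hdb : d ≤ b := hlb (Set.mem_insert_of_mem _ rfl)
      exact le_sub_comm.mp (posPart_le_of_mul_comm hc hab (sub_nonneg.mpr hda)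
        (sub_le_sub_left hdb a))
end

section
/- Let 𝒜 be a C*-algebra such that the partially ordered space 𝒜_sa of self-adjoint elements, endowed with its canonical order, is a lattice (every pair of elements has a greatest lower bound). Then 𝒜 is commutative. -/
section NonUnitalCStarAlgebra

variable {A : Type*} [NonUnitalCStarAlgebra A]

/-- Elements with orthogonal ranges and orthogonal supports satisfy the maximum norm identity. -/
lemma norm_add_le_max_of_orthogonal {x y : A} (h : star x * y = 0) (h' : x * star y = 0) :
    ‖x + y‖ ≤ max ‖x‖ ‖y‖ := by
  let _ : PartialOrder A := CStarAlgebra.spectralOrder A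
  have : StarOrderedRing A := CStarAlgebra.spectralOrderedRing A
  have h₂ : star y * x = 0 := by simpa using congrArg star h
  have h₃ : y * star x = 0 := by simpa using congrArg star h'
  set p := star x * x with hp
  set q := star y * y with hq
  have hp0 : 0 ≤ p := star_mul_self_nonneg x
  have hq0 : 0 ≤ q := star_mul_self_nonneg y
  have hpq : p * q = 0 := by
    rw [hp, hq, mul_assoc, ← mul_assoc x, h', zero_mul, mul_zero]
  have hqp : q * p = 0 := by
    rw [hp, hq, mul_assoc, ← mul_assoc y, h₃, zero_mul, mul_zero]
  have hsa : IsSelfAdjoint (p - q) := (IsSelfAdjoint.of_nonneg hp0).sub (.of_nonneg hq0)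
  have hsa' : IsSelfAdjoint (p + q) := (IsSelfAdjoint.of_nonneg hp0).add (.of_nonneg hq0)
  have hnorm : ‖p + q‖ = ‖p - q‖ := by
    have h1 := CStarRing.norm_star_mul_self (x := p - q)
    have h2 := CStarRing.norm_star_mul_self (x := p + q)
    rw [hsa.star_eq] at h1
    rw [hsa'.star_eq] at h2
    have h3 : (p + q) * (p + q) = (p - q) * (p - q) := by
      simp only [mul_add, add_mul, mul_sub, sub_mul, hpq, hqp]
      abel
    rw [h3] at h2
    exact (mul_self_inj (norm_nonneg _) (norm_nonneg _)).mp (h2.symm.trans h1)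
  have hmax : ‖p - q‖ = max ‖p‖ ‖q‖ := by
    obtain ⟨h1, h2⟩ := CFC.posPart_negPart_unique (a := p - q) rfl hpq hp0 hq0
    rw [hsa.norm_eq_max_norm_posPart_negPart, h1, h2]
  have hxy : ‖x + y‖ * ‖x + y‖ = max (‖x‖ * ‖x‖) (‖y‖ * ‖y‖) := by
    rw [← CStarRing.norm_star_mul_self (x := x + y), ← CStarRing.norm_star_mul_self (x := x),
      ← CStarRing.norm_star_mul_self (x := y), ← hmax, ← hnorm]
    congr 1
    simp only [star_add, mul_add, add_mul, h, h₂]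
    simp [hp, hq]
  rcases le_total ‖x‖ ‖y‖ with hle | hle
  · rw [max_eq_right (mul_self_le_mul_self (norm_nonneg _) hle)] at hxy
    exact ((mul_self_inj (norm_nonneg _) (norm_nonneg _)).mp hxy).le.trans (le_max_right _ _)
  · rw [max_eq_left (mul_self_le_mul_self (norm_nonneg _) hle)] at hxy
    exact ((mul_self_inj (norm_nonneg _) (norm_nonneg _)).mp hxy).le.trans (le_max_left _ _)

variable [PartialOrder A] [StarOrderedRing A]

lemma mul_eq_zero_of_conjugate_eq_zero_s1 {p b : A} (hp : 0 ≤ p) (h : b * p * star b = 0) :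
    b * p = 0 := by
  have hs : star (CFC.sqrt p) = CFC.sqrt p := (CFC.sqrt_nonneg p).star_eq
  have h0 : b * CFC.sqrt p = 0 := by
    rw [← CStarRing.mul_star_self_eq_zero_iff, star_mul, hs, mul_assoc,
      ← mul_assoc (CFC.sqrt p), CFC.sqrt_mul_sqrt_self p hp, ← mul_assoc, h]
  rw [← CFC.sqrt_mul_sqrt_self p hp, ← mul_assoc, h0, zero_mul]

lemma eq_zero_of_le_of_le_of_mul_eq_zero_s1 {m p q : A} (hm : 0 ≤ m) (hmp : m ≤ p) (hmq : m ≤ q)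
    (hqp : q * p = 0) : m = 0 := by
  have hq : star q = q := (hm.trans hmq).star_eq
  have h1 : q * m = 0 := by
    refine mul_eq_zero_of_conjugate_eq_zero_s1 hm (le_antisymm ?_ (star_right_conjugate_nonneg hm q))
    simpa [hqp] using star_right_conjugate_le_conjugate hmp q
  have h2 : m * m = 0 := by
    refine mul_eq_zero_of_conjugate_eq_zero_s1 hm (le_antisymm ?_ (star_right_conjugate_nonneg hm m))
    simpa [hm.star_eq, mul_assoc, h1] using star_right_conjugate_le_conjugate hmq m
  rwa [← CStarRing.star_mul_self_eq_zero_iff, hm.star_eq]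

/-- If the self-adjoint part is a lattice, then the modulus `z⁺ + z⁻` is the supremum of
`z` and `-z`. -/
lemma posPart_add_negPart_le_of_selfAdjoint_lattice
    (hlat : ∀ a b : selfAdjoint A, ∃ c : selfAdjoint A, IsGLB ({a, b} : Set (selfAdjoint A)) c)
    {z c : A} (hz : IsSelfAdjoint z) (hc : IsSelfAdjoint c) (h₁ : z ≤ c) (h₂ : -z ≤ c) :
    z⁺ + z⁻ ≤ c := by
  have hp := CFC.posPart_nonneg z
  have hn := CFC.negPart_nonneg z
  have hsub := CFC.posPart_sub_negPart z hz
  obtain ⟨m, hm⟩ := hlat ⟨z⁺, .of_nonneg hp⟩ ⟨z⁻, .of_nonneg hn⟩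
  have glb (w : selfAdjoint A) (hwp : (w : A) ≤ z⁺) (hwn : (w : A) ≤ z⁻) : w ≤ m :=
    hm.2 (by rintro x (rfl | rfl) <;> assumption)
  have hm0 : (m : A) = 0 :=
    eq_zero_of_le_of_le_of_mul_eq_zero_s1 (p := z⁺) (q := z⁻) (glb 0 hp hn)
      (hm.1 (Set.mem_insert _ _)) (hm.1 (Set.mem_insert_of_mem _ rfl)) (CFC.negPart_mul_posPart z)
  have half {x : A} : x = (1 / 2 : ℝ) • (x + x) := by
    rw [← two_smul ℝ x, smul_smul]; norm_num
  have hsa : IsSelfAdjoint ((1 / 2 : ℝ) • (z⁺ + z⁻ - c)) :=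
    (IsSelfAdjoint.all (1 / 2 : ℝ)).smul
      (((IsSelfAdjoint.of_nonneg hp).add (.of_nonneg hn)).sub hc)
  have key : (1 / 2 : ℝ) • (z⁺ + z⁻ - c) ≤ 0 := by
    rw [← hm0]
    refine glb ⟨_, hsa⟩ ?_ ?_
    · conv_rhs => rw [half (x := z⁺)]
      refine smul_le_smul_of_nonneg_left ?_ (by norm_num)
      rw [← hsub] at h₂
      rw [← sub_nonneg] at h₂ ⊢
      convert h₂ using 1
      abel
    · conv_rhs => rw [half (x := z⁻)]
      refine smul_le_smul_of_nonneg_left ?_ (by norm_num)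
      rw [← hsub] at h₁
      rw [← sub_nonneg] at h₁ ⊢
      convert h₁ using 1
      abel
  rw [← sub_nonpos, half (x := z⁺ + z⁻ - c), smul_add]
  exact add_nonpos key key

lemma mul_mul_eq_zero_of_selfAdjoint_lattice
    (hlat : ∀ a b : selfAdjoint A, ∃ c : selfAdjoint A, IsGLB ({a, b} : Set (selfAdjoint A)) c)
    {a b y : A} (ha : IsSelfAdjoint a) (hy : IsSelfAdjoint y) (hba : b * a = 0) :
    b * y * a = 0 := by
  set z := a * y + y * a with hzdef
  have hz : IsSelfAdjoint z := by
    simp [IsSelfAdjoint, hzdef, ha.star_eq, hy.star_eq, add_comm]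
  have hp := CFC.posPart_nonneg z
  have hn := CFC.negPart_nonneg z
  have bound (t : ℝ) (ht : 0 < t) : z⁺ + z⁻ ≤ t⁻¹ • (a * a) + t • (y * y) := by
    have hc : IsSelfAdjoint (t⁻¹ • (a * a) + t • (y * y)) := by
      simp [IsSelfAdjoint, ha.star_eq, hy.star_eq]
    have sq (s : ℝ) (hs : s * s = 1) : s • z ≤ t⁻¹ • (a * a) + t • (y * y) := by
      have h := smul_nonneg (inv_nonneg.mpr ht.le)
        (ha.sub ((IsSelfAdjoint.all (s * t)).smul hy)).mul_self_nonneg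
      rw [← sub_nonneg]
      convert h using 1
      simp only [hzdef, mul_sub, sub_mul, smul_sub, smul_add, smul_mul_assoc, mul_smul_comm,
        smul_smul]
      have e1 : t⁻¹ * (s * t) = s := by field_simp
      have e2 : t⁻¹ * (s * t * (s * t)) = t := by
        rw [show s * t * (s * t) = (s * s) * (t * t) by ring, hs]; field_simp
      simp only [e1, e2]
      abel
    exact posPart_add_negPart_le_of_selfAdjoint_lattice hlat hz hc
      (by simpa using sq 1 (by norm_num)) (by simpa using sq (-1) (by norm_num))
  have zero_of_le {p : A} (hp : 0 ≤ p) (hpz : p ≤ z⁺ + z⁻) : b * p = 0 := by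
    refine mul_eq_zero_of_conjugate_eq_zero_s1 hp ?_
    have h1 (t : ℝ) (ht : 0 < t) : ‖b * p * star b‖ ≤ t * ‖b * (y * y) * star b‖ := by
      have h := star_right_conjugate_le_conjugate (hpz.trans (bound t ht)) b
      have e : b * (t⁻¹ • (a * a) + t • (y * y)) * star b = t • (b * (y * y) * star b) := by
        simp only [mul_add, add_mul, mul_smul_comm, smul_mul_assoc, ← mul_assoc, hba]
        simp
      rw [e] at h
      refine (CStarAlgebra.norm_le_norm_of_nonneg_of_le (star_right_conjugate_nonneg hp b) h).trans
        ?_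
      rw [norm_smul, Real.norm_of_nonneg ht.le]
    refine norm_le_zero_iff.mp (le_of_forall_pos_le_add fun ε hε ↦ ?_)
    set K := ‖b * (y * y) * star b‖
    have hK : 0 ≤ K := norm_nonneg _
    refine (h1 (ε / (K + 1)) (by positivity)).trans ?_
    rw [zero_add, div_mul_eq_mul_div, div_le_iff₀ (by positivity)]
    nlinarith
  have hbz : b * z = 0 := by
    rw [← CFC.posPart_sub_negPart z hz, mul_sub, zero_of_le hp (le_add_of_nonneg_right hn),
      zero_of_le hn (le_add_of_nonneg_left hp), sub_zero]
  rwa [hzdef, mul_add, ← mul_assoc, ← mul_assoc, hba, zero_mul, zero_add] at hbz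

/-- A nonnegative element is the sum of two nonnegative elements of half its norm, the first
of which acts as a scalar on the second. -/
lemma exists_add_eq_and_mul_eq_smul {a : A} (ha : 0 ≤ a) {s : ℝ} (hs : 0 ≤ s)
    (har : ‖a‖ ≤ s + s) :
    ∃ h k : A, 0 ≤ h ∧ 0 ≤ k ∧ ‖h‖ ≤ s ∧ ‖k‖ ≤ s ∧ h + k = a ∧ h * k = s • k := by
  have hsa : IsSelfAdjoint a := .of_nonneg ha
  have hspec (x : ℝ) (hx : x ∈ quasispectrum ℝ a) : 0 ≤ x ∧ x ≤ s + s :=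
    ⟨quasispectrum_nonneg_of_nonneg a ha x hx,
      (le_abs_self x).trans
        ((NonUnitalIsometricContinuousFunctionalCalculus.norm_quasispectrum_le a hx).trans har)⟩
  have h0 : min (0 : ℝ) s = 0 := min_eq_left hs
  have k0 : max (0 - s : ℝ) 0 = 0 := max_eq_right (by linarith)
  refine ⟨cfcₙ (fun x : ℝ ↦ min x s) a, cfcₙ (fun x : ℝ ↦ max (x - s) 0) a,
    cfcₙ_nonneg fun x hx ↦ le_min (hspec x hx).1 hs, cfcₙ_nonneg fun x _ ↦ le_max_right _ _,
    norm_cfcₙ_le fun x hx ↦ ?_, norm_cfcₙ_le fun x hx ↦ ?_, ?_, ?_⟩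
  · rw [Real.norm_of_nonneg (le_min (hspec x hx).1 hs)]
    exact min_le_right _ _
  · rw [Real.norm_of_nonneg (le_max_right _ _)]
    exact max_le (by linarith [(hspec x hx).2]) hs
  · rw [← cfcₙ_add (fun x : ℝ ↦ min x s) (fun x : ℝ ↦ max (x - s) 0) a (by fun_prop) h0
      (by fun_prop) k0]
    conv_rhs => rw [← cfcₙ_id' ℝ a]
    congr 1
    ext x
    rcases le_total x s with h | h
    · rw [min_eq_left h, max_eq_right (by linarith), add_zero]
    · rw [min_eq_right h, max_eq_left (by linarith), add_sub_cancel]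
  · rw [← cfcₙ_mul (fun x : ℝ ↦ min x s) (fun x : ℝ ↦ max (x - s) 0) a (by fun_prop) h0
      (by fun_prop) k0, ← cfcₙ_smul s (fun x : ℝ ↦ max (x - s) 0) a (by fun_prop) k0]
    congr 1
    ext x
    rcases le_total x s with h | h
    · rw [max_eq_right (by linarith)]; simp
    · rw [min_eq_right h, smul_eq_mul]

lemma commute_of_forall_mul_mul_eq_zero
    (H : ∀ a b y : A, IsSelfAdjoint a → IsSelfAdjoint y → b * a = 0 → b * y * a = 0)
    {a y : A} (ha : 0 ≤ a) (hy : IsSelfAdjoint y) : Commute a y := by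
  have scalar {s : ℝ} {h k w : A} (hk : 0 ≤ k) (hw : IsSelfAdjoint w) (hhk : h * k = s • k) :
      h * w * k = s • (w * k) := by
    rw [← sub_eq_zero, ← CStarRing.star_mul_self_eq_zero_iff]
    set e := star (h * w * k - s • (w * k))
    have := H k (e * h - s • e) w (.of_nonneg hk) hw (by
      rw [sub_mul, mul_assoc, hhk, smul_mul_assoc, mul_smul_comm, sub_self])
    rw [← this]
    simp only [mul_sub, sub_mul, mul_smul_comm, smul_mul_assoc, mul_assoc]
  have bound (n : ℕ) : ∀ (r : ℝ) (a : A), 0 ≤ r → 0 ≤ a → ‖a‖ ≤ r →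
      ‖a * y - y * a‖ ≤ r / 2 ^ n * (2 * ‖y‖) := by
    induction n with
    | zero =>
      intro r a _ _ har
      have h1 := norm_sub_le (a * y) (y * a)
      have h2 := norm_mul_le a y
      have h3 := norm_mul_le y a
      have h4 := mul_le_mul_of_nonneg_right har (norm_nonneg y)
      rw [pow_zero, div_one]
      linarith
    | succ n ih =>
      intro r a hr ha har
      obtain ⟨h, k, hh, hk, hhr, hkr, rfl, hhk⟩ :=
        exists_add_eq_and_mul_eq_smul ha (s := r / 2) (by positivity) (by linarith)
      have hr' : r / 2 ^ (n + 1) = r / 2 / 2 ^ n := by rw [pow_succ]; field_simp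
      have hd : (h * y - y * h) * (k * y - y * k) = 0 := by
        have e1 := scalar hk hy hhk
        have e2 := scalar hk (by simp [IsSelfAdjoint, hy.star_eq] : IsSelfAdjoint (y * y)) hhk
        have : (h * y - y * h) * (k * y - y * k) =
            (h * y * k) * y - h * (y * y) * k - y * (h * k) * y + y * (h * y * k) := by
          noncomm_ring
        rw [this, e1, e2, hhk]
        simp only [mul_smul_comm, smul_mul_assoc, mul_assoc]
        abel
      have star_comm {x : A} (hx : 0 ≤ x) : star (x * y - y * x) = -(x * y - y * x) := by
        simp [hx.star_eq, hy.star_eq]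
      have hadd : (h + k) * y - y * (h + k) = (h * y - y * h) + (k * y - y * k) := by
        noncomm_ring
      rw [hadd, hr']
      refine (norm_add_le_max_of_orthogonal ?_ ?_).trans
        (max_le (ih _ h (by positivity) hh hhr) (ih _ k (by positivity) hk hkr))
      · rw [star_comm hh, neg_mul, hd, neg_zero]
      · rw [star_comm hk, mul_neg, hd, neg_zero]
  refine sub_eq_zero.mp (norm_le_zero_iff.mp ?_)
  have hlim : Filter.Tendsto (fun n : ℕ ↦ ‖a‖ / 2 ^ n * (2 * ‖y‖)) Filter.atTop (nhds 0) := by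
    have := (tendsto_pow_atTop_nhds_zero_of_lt_one (r := (1 / 2 : ℝ)) (by norm_num)
      (by norm_num)).const_mul ‖a‖ |>.mul_const (2 * ‖y‖)
    simpa [div_eq_mul_inv] using this
  exact ge_of_tendsto' hlim fun n ↦ bound n ‖a‖ a (norm_nonneg a) ha le_rfl

end NonUnitalCStarAlgebra

/-- If the self-adjoint part of a C*-algebra `A`, endowed with its canonical order,
is a lattice (every pair of elements has a greatest lower bound), then `A` is commutative. -/
theorem commutative_of_selfAdjoint_lattice
    {A : Type*} [NonUnitalCStarAlgebra A] [PartialOrder A] [StarOrderedRing A]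
    (hlat : ∀ a b : selfAdjoint A, ∃ c : selfAdjoint A, IsGLB ({a, b} : Set (selfAdjoint A)) c) :
    ∀ a b : A, a * b = b * a := by
  intro a b
  have hspan (x : A) : x ∈ Submodule.span ℂ {p : A | 0 ≤ p} := by
    simp [CStarAlgebra.span_nonneg]
  have key {p q : A} (hp : 0 ≤ p) (hq : 0 ≤ q) : Commute p q :=
    commute_of_forall_mul_mul_eq_zero
      (fun _ _ _ ↦ mul_mul_eq_zero_of_selfAdjoint_lattice hlat) hp (.of_nonneg hq)
  have hcomm : Commute a b := by
    induction hspan a using Submodule.span_induction with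
    | zero => exact Commute.zero_left b
    | add _ _ _ _ hx hy => exact hx.add_left hy
    | smul c _ _ hx => exact hx.smul_left c
    | mem p hp =>
      induction hspan b using Submodule.span_induction with
      | zero => exact Commute.zero_right p
      | add _ _ _ _ hx hy => exact hx.add_right hy
      | smul c _ _ hx => exact hx.smul_right c
      | mem q hq => exact key hp hq
  exact hcomm
end

section
/- Let 𝒜 be a C*-algebra. Then 𝒜 is commutative if and only if 𝒜_sa, with its canonical order, has the Riesz decomposition property, i.e. [0,x] + [0,y] = [0,x+y] for all x, y ∈ (𝒜_sa)_+. -/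
open scoped Pointwise

open Finset

section RieszDecomposition

variable {G : Type*} [AddCommGroup G] [PartialOrder G] [IsOrderedAddMonoid G]

lemma exists_sum_eq_of_Icc_add_Icc
    (h : ∀ x y : G, 0 ≤ x → 0 ≤ y → Set.Icc 0 x + Set.Icc 0 y = Set.Icc 0 (x + y))
    {ι : Type*} (s : Finset ι) (x : ι → G) (hx : ∀ i ∈ s, 0 ≤ x i) {z : G} (hz : 0 ≤ z)
    (hzx : z ≤ ∑ i ∈ s, x i) :
    ∃ c : ι → G, (∀ i ∈ s, 0 ≤ c i ∧ c i ≤ x i) ∧ ∑ i ∈ s, c i = z := by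
  classical
  induction s using Finset.induction_on generalizing z with
  | empty => exact ⟨0, by simp, by simpa using le_antisymm hz (by simpa using hzx)⟩
  | insert a s ha ih =>
    rw [sum_insert ha] at hzx
    have hs : ∀ i ∈ s, 0 ≤ x i := fun i hi ↦ hx i (mem_insert_of_mem hi)
    have hmem : z ∈ Set.Icc 0 (x a) + Set.Icc 0 (∑ i ∈ s, x i) := by
      rw [h _ _ (hx a (mem_insert_self a s)) (sum_nonneg hs)]
      exact ⟨hz, hzx⟩
    obtain ⟨u, hu, v, hv, rfl⟩ := Set.mem_add.1 hmem
    obtain ⟨c, hc, rfl⟩ := ih hs hv.1 hv.2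
    refine ⟨Function.update c a u, fun i hi ↦ ?_, ?_⟩
    · rcases eq_or_ne i a with rfl | hia
      · simpa using hu
      · simpa [hia] using hc i ((mem_insert.1 hi).resolve_left hia)
    · rw [sum_insert ha, Function.update_self]
      congr 1
      exact sum_congr rfl fun i hi ↦ Function.update_of_ne (ne_of_mem_of_not_mem hi ha) _ _

end RieszDecomposition

section Commutative

variable {A : Type*} [NonUnitalCStarAlgebra A] [PartialOrder A] [StarOrderedRing A]

lemma posPart_le_of_le_of_commute (hA : ∀ a b : A, a * b = b * a) {w y : A}
    (hw : IsSelfAdjoint w) (hy : 0 ≤ y) (hwy : w ≤ y) : w⁺ ≤ y := by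
  have hmul {a b : A} (ha : 0 ≤ a) (hb : 0 ≤ b) : 0 ≤ a * b :=
    Commute.mul_nonneg ha hb (hA a b)
  have hp := CFC.posPart_nonneg w
  have hn := CFC.negPart_nonneg w
  have hpn := CFC.posPart_mul_negPart w
  have hwpn := CFC.posPart_sub_negPart w hw
  set p := w⁺
  set n := w⁻
  have hu : IsSelfAdjoint (y - p) := (IsSelfAdjoint.of_nonneg hy).sub (.of_nonneg hp)
  have hm := CFC.negPart_nonneg (y - p)
  have hu_mul := CFC.posPart_mul_negPart (y - p)
  have hu_sub := CFC.posPart_sub_negPart (y - p) hu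
  have hu_pos := CFC.posPart_nonneg (y - p)
  set m := (y - p)⁻
  set r := (y - p)⁺
  have h1 : 0 ≤ m * p - m * m := by
    have : m * y = m * p - m * m := by
      rw [show y = p + (r - m) by rw [hu_sub]; abel, mul_add, mul_sub, hA m r, hu_mul]; abel
    exact this ▸ hmul hm hy
  have h2 : 0 ≤ m * n - m * m := by
    have : m * (y - w) = m * n - m * m := by
      rw [show y - w = n + (r - m) by rw [hu_sub, ← hwpn]; abel, mul_add, mul_sub, hA m r, hu_mul]
      abel
    exact this ▸ hmul hm (sub_nonneg.2 hwy)
  have h3 : m * m * n = 0 := by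
    refine le_antisymm ?_ (hmul (hmul hm hm) hn)
    have := hmul h1 hn
    rwa [sub_mul, mul_assoc, hpn, mul_zero, zero_sub, neg_nonneg] at this
  have h4 : m * m * m = 0 := by
    refine le_antisymm ?_ (hmul (hmul hm hm) hm)
    have := hmul hm h2
    rwa [mul_sub, ← mul_assoc, ← mul_assoc, h3, zero_sub, neg_nonneg] at this
  have hms : star m = m := hm.star_eq
  have h5 : m * m = 0 := by
    rw [← CStarRing.star_mul_self_eq_zero_iff, star_mul, hms, ← mul_assoc, h4, zero_mul]
  have h6 : m = 0 := by
    rw [← CStarRing.star_mul_self_eq_zero_iff, hms, h5]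
  rw [← sub_nonneg, ← hu_sub, h6, sub_zero]
  exact hu_pos

lemma Icc_add_Icc_selfAdjoint_of_commute (hA : ∀ a b : A, a * b = b * a)
    {x y : selfAdjoint A} (hx : 0 ≤ x) (hy : 0 ≤ y) :
    Set.Icc (0 : selfAdjoint A) x + Set.Icc (0 : selfAdjoint A) y =
      Set.Icc (0 : selfAdjoint A) (x + y) := by
  apply Set.Subset.antisymm
  · rintro _ ⟨u, hu, v, hv, rfl⟩
    exact ⟨add_nonneg hu.1 hv.1, add_le_add hu.2 hv.2⟩
  · rintro z ⟨hz, hzxy⟩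
    have hsa : IsSelfAdjoint ((z : A) - x) := z.2.sub x.2
    have hp := CFC.posPart_nonneg ((z : A) - x)
    have hn := CFC.negPart_nonneg ((z : A) - x)
    have hpn := CFC.posPart_sub_negPart ((z : A) - x) hsa
    have hpy : ((z : A) - x)⁺ ≤ y :=
      posPart_le_of_le_of_commute hA hsa hy (sub_le_iff_le_add'.2 hzxy)
    have hpz : ((z : A) - x)⁺ ≤ z :=
      posPart_le_of_le_of_commute hA hsa hz (sub_le_self _ hx)
    let v : selfAdjoint A := ⟨((z : A) - x)⁺, .of_nonneg hp⟩
    refine ⟨z - v, ⟨sub_nonneg.2 hpz, ?_⟩, v, ⟨hp, hpy⟩, sub_add_cancel z v⟩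
    change (z : A) - ((z : A) - x)⁺ ≤ x
    rw [sub_le_comm]
    exact hpn.symm.trans_le (sub_le_self _ hn)

end Commutative

section Bernstein

variable {R : Type*} [Ring R]

/-- The value at `g` of the `i`-th Bernstein polynomial of degree `n`. -/
noncomputable def bernsteinAt (g : R) (n i : ℕ) : R :=
  Polynomial.aeval g (bernsteinPolynomial ℤ n i)

lemma sum_bernsteinAt (g : R) (n : ℕ) :
    ∑ i ∈ range (n + 1), bernsteinAt g n i = 1 := by
  simp only [bernsteinAt]
  rw [← map_sum, bernsteinPolynomial.sum, map_one]

lemma sum_sq_mul_bernsteinAt (g : R) (n : ℕ) :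
    ∑ i ∈ range (n + 1), (n * g - i) ^ 2 * bernsteinAt g n i =
      n * g * (1 - g) := by
  simpa [bernsteinAt, map_sum, nsmul_eq_mul] using
    congrArg (Polynomial.aeval g) (bernsteinPolynomial.variance ℤ n)

end Bernstein

section Unital

variable {U : Type*} [CStarAlgebra U] [PartialOrder U] [StarOrderedRing U]

lemma star_sum_mul_self_le {ι : Type*} (s : Finset ι) (c k w : ι → U)
    (hk : ∀ i ∈ s, IsSelfAdjoint (k i)) (hc : ∀ i ∈ s, 0 ≤ c i) (hcw : ∀ i ∈ s, c i ≤ w i)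
    (hc1 : ∑ i ∈ s, c i ≤ 1) :
    star (∑ i ∈ s, c i * k i) * (∑ i ∈ s, c i * k i) ≤ ∑ i ∈ s, k i * w i * k i := by
  set q := ∑ i ∈ s, c i * k i with hq
  have hq' : star q = ∑ i ∈ s, k i * c i := by
    rw [hq, star_sum]
    exact sum_congr rfl fun i hi ↦ by rw [star_mul, (hk i hi).star_eq, (hc i hi).star_eq]
  have h1 : ∑ i ∈ s, star (k i - q) * c i * (k i - q) =
      ∑ i ∈ s, k i * c i * k i - star q * q - star q * q + star q * (∑ i ∈ s, c i) * q := by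
    calc ∑ i ∈ s, star (k i - q) * c i * (k i - q) =
        ∑ i ∈ s, (k i * c i * k i - k i * c i * q - star q * (c i * k i) +
          star q * c i * q) := sum_congr rfl fun i hi ↦ by
            rw [star_sub, (hk i hi).star_eq]; noncomm_ring
      _ = _ := by
        rw [sum_add_distrib, sum_sub_distrib, sum_sub_distrib, ← sum_mul, ← mul_sum, ← sum_mul,
          ← mul_sum, ← hq', ← hq]
  have h2 : 0 ≤ ∑ i ∈ s, star (k i - q) * c i * (k i - q) :=
    sum_nonneg fun i hi ↦ star_left_conjugate_nonneg (hc i hi) _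
  have h3 : star q * (∑ i ∈ s, c i) * q ≤ star q * q := by
    simpa using star_left_conjugate_le_conjugate hc1 q
  have h4 : ∑ i ∈ s, k i * c i * k i ≤ ∑ i ∈ s, k i * w i * k i :=
    sum_le_sum fun i hi ↦ (hk i hi).conjugate_le_conjugate (hcw i hi)
  rw [h1] at h2
  calc star q * q ≤ star q * q + (∑ i ∈ s, k i * c i * k i - star q * q - star q * q +
        star q * (∑ i ∈ s, c i) * q) := le_add_of_nonneg_right h2
    _ = ∑ i ∈ s, k i * c i * k i + (star q * (∑ i ∈ s, c i) * q - star q * q) := by abel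
    _ ≤ ∑ i ∈ s, k i * c i * k i := by
      simpa using h3
    _ ≤ _ := h4

lemma bernsteinAt_nonneg {g : U} (hg : 0 ≤ g) (hg1 : g ≤ 1) (n i : ℕ) :
    0 ≤ bernsteinAt g n i := by
  have h1 : 0 ≤ 1 - g := sub_nonneg.2 hg1
  have hc : Commute (g ^ i) ((1 - g) ^ (n - i)) :=
    (((Commute.one_right g).sub_right (.refl g)).pow_pow _ _)
  have := nsmul_nonneg (Commute.mul_nonneg (CStarAlgebra.pow_nonneg hg i)
    (CStarAlgebra.pow_nonneg h1 (n - i)) hc) (n.choose i)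
  simpa [bernsteinAt, bernsteinPolynomial, nsmul_eq_mul, mul_assoc] using this

/-- If `c ≤ 1` decomposes as a sum of elements dominated by the pieces `h * bᵢ(g) * h`, where `bᵢ`
are the Bernstein polynomials of degree `n`, then the commutator of `c` and `g` is `O(1 / √n)`. -/
lemma norm_sq_commutator_le {g h c : U} (hg : 0 ≤ g) (hg1 : g ≤ 1) (hh1 : ‖h‖ ≤ 1)
    (hgh : Commute g h) (hc1 : c ≤ 1) (n : ℕ) (d : ℕ → U)
    (hd : ∀ i ∈ range (n + 1), 0 ≤ d i ∧
      d i ≤ h * bernsteinAt g n i * h)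
    (hdc : ∑ i ∈ range (n + 1), d i = c) :
    (n : ℝ) * ‖c * g - g * c‖ ^ 2 ≤ 4 := by
  set b : ℕ → U := bernsteinAt g n
  have hgs : IsSelfAdjoint g := .of_nonneg hg
  have hns : IsSelfAdjoint (n * g : U) := by
    rw [IsSelfAdjoint, star_mul, star_natCast, hgs.star_eq, (Nat.cast_commute n g).eq]
  set k : ℕ → U := fun i ↦ n * g - i
  have hk (i : ℕ) : IsSelfAdjoint (k i) := hns.sub (.natCast i)
  have hkh (i : ℕ) : Commute (k i) h :=
    ((Nat.cast_commute n h).mul_left hgh).sub_left (Nat.cast_commute i h)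
  have hkb (i : ℕ) : Commute (b i) (k i) := by
    have : k i = Polynomial.aeval g ((n : Polynomial ℤ) * Polynomial.X - (i : Polynomial ℤ)) := by simp [k]
    rw [this]
    exact (Commute.all _ _).map (Polynomial.aeval g)
  set q := ∑ i ∈ range (n + 1), d i * k i with hq
  have hle := star_sum_mul_self_le (range (n + 1)) d k (fun i ↦ h * b i * h) (fun i _ ↦ hk i)
    (fun i hi ↦ (hd i hi).1) (fun i hi ↦ (hd i hi).2) (hdc ▸ hc1)
  have hvar : ∑ i ∈ range (n + 1), k i * (h * b i * h) * k i = h * (n * g * (1 - g)) * h := by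
    rw [← sum_sq_mul_bernsteinAt, mul_sum, sum_mul]
    refine sum_congr rfl fun i _ ↦ ?_
    calc k i * (h * b i * h) * k i = (k i * h) * b i * (h * k i) := by noncomm_ring
      _ = h * k i * (b i * k i) * h := by rw [(hkh i).eq, ← (hkh i).eq]; noncomm_ring
      _ = h * (k i ^ 2 * b i) * h := by rw [(hkb i).eq]; noncomm_ring
  rw [← hq, hvar] at hle
  have hnorm_one (x : U) (hx : 0 ≤ x) (hx1 : x ≤ 1) : ‖x‖ ≤ 1 :=
    (CStarAlgebra.norm_le_one_iff_of_nonneg x hx).2 hx1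
  have hg_norm := hnorm_one g hg hg1
  have hg'_norm := hnorm_one (1 - g) (sub_nonneg.2 hg1) (sub_le_self _ hg)
  have hqn : ‖q‖ ^ 2 ≤ n := by
    rw [sq, ← CStarRing.norm_star_mul_self]
    refine (CStarAlgebra.norm_le_norm_of_nonneg_of_le (star_mul_self_nonneg q) hle).trans ?_
    have : h * (n * g * (1 - g)) * h = n • (h * (g * (1 - g)) * h) := by
      rw [nsmul_eq_mul]
      simp only [mul_assoc, (Nat.cast_commute n h).left_comm]
    rw [this]
    refine (norm_nsmul_le).trans ?_
    have : ‖h * (g * (1 - g)) * h‖ ≤ 1 * (1 * 1) * 1 := by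
      refine (norm_mul_le _ _).trans ?_
      gcongr
      refine (norm_mul_le _ _).trans ?_
      gcongr
      refine (norm_mul_le _ _).trans ?_
      gcongr
    simpa using mul_le_mul_of_nonneg_left this (Nat.cast_nonneg (α := ℝ) n)
  have hq_eq : q = c * (n * g) - ∑ i ∈ range (n + 1), d i * i := by
    simp only [hq, k, mul_sub, sum_sub_distrib, ← sum_mul, hdc]
  have hcs : IsSelfAdjoint c := hdc ▸ .of_nonneg (sum_nonneg fun i hi ↦ (hd i hi).1)
  have hes : IsSelfAdjoint (∑ i ∈ range (n + 1), d i * (i : U)) := by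
    refine .of_nonneg (sum_nonneg fun i hi ↦ ?_)
    rw [← nsmul_eq_mul']
    exact nsmul_nonneg (hd i hi).1 i
  have hcomm : q - star q = n • (c * g - g * c) := by
    rw [hq_eq, star_sub, star_mul, hns.star_eq, hcs.star_eq, hes.star_eq, nsmul_eq_mul, mul_sub,
      (Nat.cast_commute n c).symm.left_comm, ← mul_assoc (n : U) g c]
    abel
  have hfin : n * ‖c * g - g * c‖ ≤ 2 * ‖q‖ := by
    calc n * ‖c * g - g * c‖ = ‖n • (c * g - g * c)‖ := by
          rw [← Nat.cast_smul_eq_nsmul ℝ, norm_smul]; simp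
      _ ≤ ‖q‖ + ‖star q‖ := hcomm ▸ norm_sub_le _ _
      _ = 2 * ‖q‖ := by rw [norm_star]; ring
  rcases n.eq_zero_or_pos with rfl | hn
  · simp
  have hn' : (0 : ℝ) < n := by exact_mod_cast hn
  have := pow_le_pow_left₀ (by positivity) hfin 2
  refine le_of_mul_le_mul_left ?_ hn'
  nlinarith

end Unital

section SquareZero

variable {A : Type*} [NonUnitalCStarAlgebra A]

lemma eq_zero_of_sq_zero
    (H : ∀ h y : A, IsSelfAdjoint h → h * (h * y - y * h) * h = 0) {x : A} (hx : x * x = 0) :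
    x = 0 := by
  have hxs : star x * star x = 0 := by rw [← star_mul, hx, star_zero]
  have h1 := H (x + star x) x (.add_star_self x)
  have h2 : x * star x * x * star x = star x * x * star x * x := by
    rw [← sub_eq_zero, ← h1]
    simp only [mul_add, add_mul, mul_sub, sub_mul, ← mul_assoc, hx, hxs, zero_mul]
    simp only [mul_assoc, hx, hxs, mul_zero]
    abel
  have h3 : x * star x * x * star x * x = 0 := by
    rw [h2, mul_assoc, hx, mul_zero]
  have h4 : x * star x * x = 0 := by
    rw [← CStarRing.star_mul_self_eq_zero_iff]
    simp only [star_mul, star_star, mul_assoc] at h3 ⊢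
    rw [h3, mul_zero]
  have h5 : star x * x = 0 := by
    rw [← CStarRing.star_mul_self_eq_zero_iff]
    simp only [star_mul, star_star, mul_assoc] at h4 ⊢
    rw [h4, mul_zero]
  exact (CStarRing.star_mul_self_eq_zero_iff x).1 h5

lemma commute_of_isSelfAdjoint
    (H : ∀ h y : A, IsSelfAdjoint h → h * (h * y - y * h) * h = 0) {h : A}
    (hh : IsSelfAdjoint h) (y : A) : h * y = y * h := by
  have hred {a : A} (ha : a * a = 0) : a = 0 := eq_zero_of_sq_zero H ha
  have h0 := H h y hh
  rw [← sub_eq_zero]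
  set z := h * y - y * h with hz
  have h1 : h * z = 0 := hred (by rw [← mul_assoc, h0, zero_mul])
  have h2 : z * h = 0 := hred (by rw [← mul_assoc, mul_assoc z, h1, mul_zero, zero_mul])
  have h3 : z * y * h = 0 := hred (by
    rw [mul_assoc, ← mul_assoc h, ← mul_assoc h, h1, zero_mul, zero_mul, mul_zero])
  apply hred
  nth_rewrite 2 [hz]
  rw [mul_sub, ← mul_assoc, ← mul_assoc, h2, h3, zero_mul, sub_zero]

end SquareZero

section Converse

lemma inr_finset_sum {A ι : Type*} [NonUnitalNonAssocRing A] [Module ℂ A] (s : Finset ι)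
    (f : ι → A) : ((∑ i ∈ s, f i : A) : Unitization ℂ A) = ∑ i ∈ s, (f i : Unitization ℂ A) :=
  map_sum (Unitization.inrHom ℂ ℂ A) f s

variable {A : Type*} [NonUnitalCStarAlgebra A] [PartialOrder A] [StarOrderedRing A]

open Unitization CStarAlgebra

lemma commute_conjugate_of_rieszDecomposition
    (H : ∀ x y : selfAdjoint A, 0 ≤ x → 0 ≤ y →
        Set.Icc (0 : selfAdjoint A) x + Set.Icc (0 : selfAdjoint A) y =
          Set.Icc (0 : selfAdjoint A) (x + y))
    {h y : A} (hh : IsSelfAdjoint h) (hh1 : ‖h‖ ≤ 1) (hy : 0 ≤ y) (hy1 : ‖y‖ ≤ 1) :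
    Commute (h * y * h) h := by
  have hyU : (y : A⁺¹) ≤ 1 :=
    (norm_le_one_iff_of_nonneg _ (inr_nonneg_iff.2 hy)).1 (by rwa [norm_inr])
  have hhU : IsSelfAdjoint (h : A⁺¹) := hh.inr ℂ
  have hh1U : ‖(h : A⁺¹)‖ ≤ 1 := by rwa [norm_inr]
  have hle : (h : A⁺¹) ≤ 1 := hhU.le_algebraMap_norm_self.trans <| by
    simpa using algebraMap_mono A⁺¹ hh1U
  have hge : -1 ≤ (h : A⁺¹) := (neg_le_neg (by
    simpa using algebraMap_mono A⁺¹ hh1U)).trans hhU.neg_algebraMap_norm_le_self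
  set g : A⁺¹ := (1 / 2 : ℝ) • (1 + (h : A⁺¹)) with hg_def
  have hg : 0 ≤ g := smul_nonneg (by norm_num) (by simpa using add_le_add_right hge 1)
  have hg1 : g ≤ 1 := by
    have : 0 ≤ (1 / 2 : ℝ) • (1 - (h : A⁺¹)) := smul_nonneg (by norm_num) (sub_nonneg.2 hle)
    rw [← sub_nonneg]
    convert this using 1
    rw [hg_def]
    module
  have hgh : Commute g (h : A⁺¹) := by
    exact (((Commute.one_left _).add_left (.refl _)).smul_left _)
  set b : ℕ → ℕ → A⁺¹ := bernsteinAt g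
  have hb (n i : ℕ) : 0 ≤ b n i := bernsteinAt_nonneg hg hg1 n i
  have hx (n i : ℕ) : ((((h : A⁺¹) * b n i * h).snd : A) : A⁺¹) = h * b n i * h := by
    ext <;> simp
  have hxn (n i : ℕ) : 0 ≤ ((h : A⁺¹) * b n i * h).snd := by
    rw [← inr_nonneg_iff, hx]
    exact hhU.conjugate_nonneg (hb n i)
  let x (n i : ℕ) : selfAdjoint A := ⟨_, .of_nonneg (hxn n i)⟩
  let z : selfAdjoint A := ⟨h * y * h, .of_nonneg (hh.conjugate_nonneg hy)⟩
  have hz : 0 ≤ z := hh.conjugate_nonneg hy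
  have hzle : ((h * y * h : A) : A⁺¹) ≤ h * h := by
    simpa using hhU.conjugate_le_conjugate hyU
  have hsum (n : ℕ) : ∑ i ∈ range (n + 1), (h : A⁺¹) * b n i * h = h * h := by
    rw [← sum_mul, ← mul_sum, sum_bernsteinAt, mul_one]
  have hzx (n : ℕ) : z ≤ ∑ i ∈ range (n + 1), x n i := by
    have hcoe : ((∑ i ∈ range (n + 1), x n i : selfAdjoint A) : A) = h * h := by
      apply inr_injective (R := ℂ)
      rw [inr_mul, ← hsum n, AddSubgroup.val_finsetSum, inr_finset_sum]
      exact sum_congr rfl fun i _ ↦ hx n i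
    change h * y * h ≤ _
    rw [hcoe, ← inr_le_iff _ _ (.of_nonneg (hh.conjugate_nonneg hy))
      (.of_nonneg hh.mul_self_nonneg), inr_mul ℂ h h]
    exact hzle
  have hz1 : ((h * y * h : A) : A⁺¹) ≤ 1 := by
    refine (norm_le_one_iff_of_nonneg _ (inr_nonneg_iff.2 (hh.conjugate_nonneg hy))).1 ?_
    rw [norm_inr]
    calc ‖h * y * h‖ ≤ ‖h‖ * ‖y‖ * ‖h‖ := (norm_mul_le _ _).trans (by gcongr; exact norm_mul_le _ _)
      _ ≤ 1 * 1 * 1 := by gcongr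
      _ = 1 := by norm_num
  set c : A⁺¹ := ((h * y * h : A) : A⁺¹) 
  have hbound (n : ℕ) : (n : ℝ) * ‖c * g - g * c‖ ^ 2 ≤ 4 := by
    obtain ⟨d, hd, hdz⟩ := exists_sum_eq_of_Icc_add_Icc H (range (n + 1)) (x n)
      (fun i _ ↦ hxn n i) hz (hzx n)
    refine norm_sq_commutator_le hg hg1 hh1U hgh hz1 n (fun i ↦ ((d i : A) : A⁺¹))
      (fun i hi ↦ ⟨inr_nonneg_iff.2 (hd i hi).1, ?_⟩) ?_
    · change _ ≤ (h : A⁺¹) * b n i * h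
      rw [← hx, inr_le_iff _ _ (d i).2 (x n i).2]
      exact (hd i hi).2
    · have := congrArg (fun t : selfAdjoint A ↦ ((t : A) : A⁺¹)) hdz
      simpa only [AddSubgroup.val_finsetSum, inr_finset_sum] using this
  have hcg : c * g - g * c = 0 := by
    by_contra hne
    have hpos : 0 < ‖c * g - g * c‖ ^ 2 := by positivity
    obtain ⟨n, hn⟩ := exists_nat_gt (4 / ‖c * g - g * c‖ ^ 2)
    rw [div_lt_iff₀ hpos] at hn
    exact (hbound n).not_gt hn
  apply inr_injective (R := ℂ)
  have : c * g - g * c = (1 / 2 : ℝ) • (c * h - h * c) := by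
    rw [hg_def, mul_smul_comm, smul_mul_assoc, ← smul_sub]
    noncomm_ring
  rw [this, smul_eq_zero_iff_right (by norm_num), sub_eq_zero] at hcg
  rw [inr_mul, inr_mul ℂ h]
  exact hcg

lemma sq_mul_mul_eq_of_rieszDecomposition
    (H : ∀ x y : selfAdjoint A, 0 ≤ x → 0 ≤ y →
        Set.Icc (0 : selfAdjoint A) x + Set.Icc (0 : selfAdjoint A) y =
          Set.Icc (0 : selfAdjoint A) (x + y))
    {h : A} (hh : IsSelfAdjoint h) (y : A) : h * (h * y - y * h) * h = 0 := by
  have key {h : A} (hh : IsSelfAdjoint h) (hh1 : ‖h‖ ≤ 1) (y : A) :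
      h * (h * y - y * h) * h = 0 := by
    have hy : y ∈ Submodule.span ℂ ({x : A | 0 ≤ x} ∩ Metric.closedBall 0 1) := by
      simp [span_nonneg_inter_unitClosedBall]
    induction hy using Submodule.span_induction with
    | mem y hy =>
      have := (commute_conjugate_of_rieszDecomposition H hh hh1 hy.1 (by simpa using hy.2)).eq
      rw [mul_sub, sub_mul, sub_eq_zero]
      simpa only [mul_assoc] using this.symm
    | zero => simp
    | add y z _ _ hy hz =>
      calc h * (h * (y + z) - (y + z) * h) * h =
          h * (h * y - y * h) * h + h * (h * z - z * h) * h := by noncomm_ring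
        _ = 0 := by rw [hy, hz, add_zero]
    | smul r y _ hy =>
      rw [mul_smul_comm, smul_mul_assoc, ← smul_sub, mul_smul_comm, smul_mul_assoc, hy, smul_zero]
  rcases eq_or_ne h 0 with rfl | h0
  · simp
  have h0' : ‖h‖ ≠ 0 := norm_ne_zero_iff.2 h0
  have := key (h := (‖h‖⁻¹ : ℝ) • h) ((IsSelfAdjoint.all _).smul hh) (by simp [norm_smul, h0']) y
  simpa only [mul_smul_comm, smul_mul_assoc, ← smul_sub, smul_eq_zero, inv_eq_zero, h0',
    false_or] using this

end Converse

/-- A C*-algebra `A` is commutative if and only if its self-adjoint part, endowed with its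
canonical order, has the Riesz decomposition property:
`[0,x] + [0,y] = [0,x+y]` for all positive self-adjoint `x, y`. -/
theorem commutative_iff_rieszDecomposition
    {A : Type*} [NonUnitalCStarAlgebra A] [PartialOrder A] [StarOrderedRing A] :
    (∀ a b : A, a * b = b * a) ↔
      (∀ x y : selfAdjoint A, 0 ≤ x → 0 ≤ y →
        Set.Icc (0 : selfAdjoint A) x + Set.Icc (0 : selfAdjoint A) y =
          Set.Icc (0 : selfAdjoint A) (x + y)) := by
  refine ⟨fun hA x y hx hy ↦ Icc_add_Icc_selfAdjoint_of_commute hA hx hy, fun H a b ↦ ?_⟩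
  have ha : a ∈ Submodule.span ℂ {x : A | 0 ≤ x} := by simp [CStarAlgebra.span_nonneg]
  induction ha using Submodule.span_induction with
  | mem a ha =>
    exact commute_of_isSelfAdjoint
      (fun _ y hh ↦ sq_mul_mul_eq_of_rieszDecomposition H hh y) (.of_nonneg ha) b
  | zero => simp
  | add x y _ _ hx hy => rw [add_mul, mul_add, hx, hy]
  | smul r x _ hx => rw [smul_mul_assoc, mul_smul_comm, hx]
end
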